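/- arXiv:2306.14765 — 2 statements merged into one kernel-verified Lean document; each statement's English description precedes it below -/
import Mathlib

section
/- Let M be a positive integer and C : ℤ → ℂ an M-periodic function with mean value zero (i.e., the sum of C(n) for n = 1 to M is 0). Then the L-series L(s, C) = Σ_{n≥1} C(n)/n^s converges for Re(s) > 1 and its value extended to s = 0 is given by L(0, C) = -Σ_{n=1}^{M} C(n)·B₁(n/M), where B₁(x) = x - 1/2 is the first Bernoulli polynomial. -/
open Complex Finset

/-!
For `a ∈ (0, 1]` and `1 < re s`, expanding a geometric series shows that `Γ(s) ζ(s, a)` is the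
Mellin transform of `e^{-at} / (1 - e^{-t}) = 1 / t + (1 / 2 - a) + O(t)`. In the difference of two
such kernels the pole at `t = 0` cancels, and subtracting `(b - a) e^{-t}` removes the constant term
too. The Mellin transform of what remains is holomorphic on `-1 < re s`, so that there
`ζ(s, a) - ζ(s, b) - (b - a)` is this transform divided by `Γ(s)`. Since `1 / Γ` vanishes at `0`, we
get `ζ(0, a) - ζ(0, b) = b - a`, and `b = 1` with `ζ(0) = -1 / 2` gives `ζ(0, a) = 1 / 2 - a`.
-/

lemma LSeriesSummable_of_periodic {f : ℕ → ℂ} {M : ℕ} (hf : Function.Periodic f M) (hM : 0 < M)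
    {s : ℂ} (hs : 1 < s.re) : LSeriesSummable f s := by
  refine LSeriesSummable_of_bounded_of_one_lt_re (m := ∑ k ∈ range M, ‖f k‖) (fun n _ ↦ ?_) hs
  rw [← hf.map_mod_nat n]
  exact single_le_sum (f := fun k ↦ ‖f k‖) (fun _ _ ↦ norm_nonneg _) (mem_range.2 (n.mod_lt hM))

section HurwitzKernel

open Filter Topology Asymptotics HurwitzZeta

lemma hasMellin_exp_neg {s : ℂ} (hs : 0 < s.re) :
    HasMellin (fun t ↦ (Real.exp (-t) : ℂ)) s (Gamma s) := by
  refine ⟨?_, by rw [Gamma_eq_integral hs, GammaIntegral_eq_mellin]⟩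
  simpa only [MellinConvergent, smul_eq_mul, mul_comm, ofReal_exp, ofReal_neg]
    using GammaIntegral_convergent hs

lemma isBigO_exp_mul_sub_one_sub_mul (c : ℝ) :
    (fun t ↦ Real.exp (c * t) - 1 - c * t) =O[𝓝 0] (· ^ 2) := by
  have htaylor : (fun x ↦ Real.exp x - 1 - x) =O[𝓝 0] (· ^ 2) := by
    simpa [sum_range_succ, sub_sub] using Real.exp_sub_sum_range_isBigO_pow 2
  refine (htaylor.comp_tendsto ((continuous_const_mul c).tendsto' 0 0 (mul_zero c))).trans ?_
  simpa only [Function.comp_def, mul_pow] using isBigO_const_mul_self (c ^ 2) (· ^ 2) (𝓝 (0 : ℝ))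

lemma one_sub_exp_neg_pos {t : ℝ} (ht : 0 < t) : 0 < 1 - Real.exp (-t) :=
  sub_pos.2 (Real.exp_lt_one_iff.2 (neg_lt_zero.2 ht))

lemma isBigO_inv_one_sub_exp_neg : (fun t ↦ (1 - Real.exp (-t))⁻¹) =O[𝓝 0] (·⁻¹) := by
  have hderiv : HasDerivAt (fun t : ℝ ↦ 1 - Real.exp (-t)) 1 0 := by
    simpa using (hasDerivAt_neg (0 : ℝ)).exp.const_sub 1
  have hequiv : (fun t ↦ 1 - Real.exp (-t)) ~[𝓝 0] fun t ↦ t := by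
    simpa [IsEquivalent, Pi.sub_def] using hderiv.isLittleO
  exact hequiv.inv.isBigO

/-- The kernel `e^{-at} / (1 - e^{-t})`, whose Mellin transform at `s` is `Γ(s) ζ(s, a)` for
`a ∈ (0, 1]` and `1 < re s`. -/
noncomputable def hurwitzKernel (a t : ℝ) : ℝ :=
  Real.exp (-a * t) * (1 - Real.exp (-t))⁻¹

lemma continuousOn_hurwitzKernel (a : ℝ) : ContinuousOn (hurwitzKernel a) (Set.Ioi 0) :=
  ContinuousOn.mul (by fun_prop)
    (ContinuousOn.inv₀ (by fun_prop) fun _ ht ↦ (one_sub_exp_neg_pos ht).ne')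

lemma isBigO_nhdsGT_hurwitzKernel (a : ℝ) : hurwitzKernel a =O[𝓝[>] 0] (· ^ (-1 : ℝ)) := by
  have hcont : Continuous fun t ↦ Real.exp (-a * t) := by fun_prop
  refine ((hcont.continuousAt.isBigO_one ℝ).mul isBigO_inv_one_sub_exp_neg).mono
    nhdsWithin_le_nhds |>.congr_right fun t ↦ ?_
  rw [one_mul, Real.rpow_neg_one]

lemma isBigO_atTop_hurwitzKernel {a : ℝ} (ha : 0 < a) (r : ℝ) :
    hurwitzKernel a =O[atTop] (· ^ r) := by
  have hlim : Tendsto (fun t : ℝ ↦ (1 - Real.exp (-t))⁻¹) atTop (𝓝 (1 - 0)⁻¹) :=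
    (Real.tendsto_exp_neg_atTop_nhds_zero.const_sub 1).inv₀ (by norm_num)
  exact ((isLittleO_exp_neg_mul_rpow_atTop ha r).isBigO.mul (hlim.isBigO_one ℝ)).congr_right
    fun t ↦ mul_one _

lemma mellinConvergent_hurwitzKernel {a : ℝ} (ha : 0 < a) {s : ℂ} (hs : 1 < s.re) :
    MellinConvergent (fun t ↦ (hurwitzKernel a t : ℂ)) s :=
  mellinConvergent_of_isBigO_rpow (a := s.re + 1) (b := 1)
    ((continuous_ofReal.comp_continuousOn (continuousOn_hurwitzKernel a)).locallyIntegrableOn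
      measurableSet_Ioi)
    (isBigO_ofReal_left.2 (isBigO_atTop_hurwitzKernel ha _)) (lt_add_one _)
    (isBigO_ofReal_left.2 (isBigO_nhdsGT_hurwitzKernel a)) hs

lemma hasSum_hurwitzKernel (a : ℝ) {t : ℝ} (ht : 0 < t) :
    HasSum (fun n : ℕ ↦ Real.exp (-(n + a) * t)) (hurwitzKernel a t) := by
  have hgeom :=
    hasSum_geometric_of_lt_one (Real.exp_pos (-t)).le (sub_pos.1 (one_sub_exp_neg_pos ht))
  refine (hgeom.mul_left (Real.exp (-a * t))).congr_fun fun n ↦ ?_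
  rw [← Real.exp_nat_mul, ← Real.exp_add]
  ring_nf

theorem hasMellin_hurwitzKernel {a : ℝ} (ha : a ∈ Set.Ioc 0 1) {s : ℂ} (hs : 1 < s.re) :
    HasMellin (fun t ↦ (hurwitzKernel a t : ℂ)) s (Gamma s * hurwitzZeta a s) := by
  refine ⟨mellinConvergent_hurwitzKernel ha.1 hs, ?_⟩
  have hzeta := hasSum_hurwitzZeta_of_one_lt_re (Set.Ioc_subset_Icc_self ha) hs
  have hpos (n : ℕ) : 0 < n + a := add_pos_of_nonneg_of_pos n.cast_nonneg ha.1
  have hmellin := hasSum_mellin (a := fun _ ↦ 1) (p := fun n : ℕ ↦ n + a)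
    (F := fun t ↦ (hurwitzKernel a t : ℂ)) (fun n ↦ .inr (hpos n)) (zero_lt_one.trans hs)
    (fun t ht ↦ by simpa only [one_mul] using hasSum_ofReal.2 (hasSum_hurwitzKernel a ht))
    (hzeta.summable.norm.congr fun n ↦ by
      rw [norm_div, ← norm_cpow_eq_rpow_re_of_pos (hpos n), ofReal_add, ofReal_natCast])
  refine hmellin.unique ((hzeta.mul_left (Gamma s)).congr_fun fun n ↦ ?_)
  rw [ofReal_add, ofReal_natCast, mul_div_assoc]

/-- The difference of the kernels for `a` and `b`, corrected by a multiple of `e^{-t}` so that it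
vanishes to first order at `t = 0`. -/
noncomputable def hurwitzKernelDiff (a b t : ℝ) : ℝ :=
  hurwitzKernel a t - hurwitzKernel b t - (b - a) * Real.exp (-t)

lemma continuousOn_hurwitzKernelDiff (a b : ℝ) :
    ContinuousOn (hurwitzKernelDiff a b) (Set.Ioi 0) :=
  ((continuousOn_hurwitzKernel a).sub (continuousOn_hurwitzKernel b)).sub (by fun_prop)

lemma isBigO_nhdsGT_hurwitzKernelDiff (a b : ℝ) :
    hurwitzKernelDiff a b =O[𝓝[>] 0] fun t ↦ t := by
  let E (c t : ℝ) : ℝ := Real.exp (c * t) - 1 - c * t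
  have hE (c : ℝ) : E c =O[𝓝 0] (· ^ 2) := isBigO_exp_mul_sub_one_sub_mul c
  -- The numerator over `1 - e^{-t}` has no constant or linear term, so only the errors `E` survive.
  have hnum := ((hE (-a)).sub (hE (-b))).sub (((hE (-1)).sub (hE (-2))).const_mul_left (b - a))
  refine ((hnum.mul isBigO_inv_one_sub_exp_neg).mono nhdsWithin_le_nhds).congr' ?_ ?_
  · filter_upwards [self_mem_nhdsWithin] with t ht
    have hexp : Real.exp (-2 * t) = Real.exp (-t) * Real.exp (-t) := by
      rw [← Real.exp_add]
      ring_nf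
    have hne := (one_sub_exp_neg_pos ht).ne'
    simp only [E, hurwitzKernelDiff, hurwitzKernel, hexp, neg_one_mul]
    field_simp
    ring
  · filter_upwards [self_mem_nhdsWithin] with t (ht : 0 < t)
    field_simp

lemma isBigO_atTop_hurwitzKernelDiff {a b : ℝ} (ha : 0 < a) (hb : 0 < b) (r : ℝ) :
    hurwitzKernelDiff a b =O[atTop] (· ^ r) := by
  have hexp : (fun t ↦ Real.exp (-t)) =O[atTop] (· ^ r) := by
    simpa only [neg_one_mul] using (isLittleO_exp_neg_mul_rpow_atTop one_pos r).isBigO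
  exact ((isBigO_atTop_hurwitzKernel ha r).sub (isBigO_atTop_hurwitzKernel hb r)).sub
    (hexp.const_mul_left _)

lemma differentiableAt_mellin_hurwitzKernelDiff {a b : ℝ} (ha : 0 < a) (hb : 0 < b) {s : ℂ}
    (hs : -1 < s.re) : DifferentiableAt ℂ (mellin fun t ↦ (hurwitzKernelDiff a b t : ℂ)) s := by
  refine mellin_differentiableAt_of_isBigO_rpow (a := s.re + 1) (b := -1)
    ((continuous_ofReal.comp_continuousOn
      (continuousOn_hurwitzKernelDiff a b)).locallyIntegrableOn measurableSet_Ioi)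
    (isBigO_ofReal_left.2 (isBigO_atTop_hurwitzKernelDiff ha hb _)) (lt_add_one _)
    (isBigO_ofReal_left.2 ?_) hs
  simpa only [neg_neg, Real.rpow_one] using isBigO_nhdsGT_hurwitzKernelDiff a b

lemma mellin_hurwitzKernelDiff {a b : ℝ} (ha : a ∈ Set.Ioc 0 1) (hb : b ∈ Set.Ioc 0 1) {s : ℂ}
    (hs : 1 < s.re) :
    mellin (fun t ↦ (hurwitzKernelDiff a b t : ℂ)) s =
      Gamma s * (hurwitzZeta a s - hurwitzZeta b s - (b - a)) := by
  obtain ⟨hconv_a, hval_a⟩ := hasMellin_hurwitzKernel ha hs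
  obtain ⟨hconv_b, hval_b⟩ := hasMellin_hurwitzKernel hb hs
  obtain ⟨hconv_exp, hval_exp⟩ := hasMellin_exp_neg (zero_lt_one.trans hs)
  have hsub := hasMellin_sub hconv_a hconv_b
  have hsmul := hasMellin_const_smul hconv_exp ((b : ℂ) - a)
  calc mellin (fun t ↦ (hurwitzKernelDiff a b t : ℂ)) s
    _ = mellin (fun t ↦ (hurwitzKernel a t : ℂ) - hurwitzKernel b t -
          ((b : ℂ) - a) • (Real.exp (-t) : ℂ)) s := by
      simp only [hurwitzKernelDiff, ofReal_sub, ofReal_mul, smul_eq_mul]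
    _ = Gamma s * hurwitzZeta a s - Gamma s * hurwitzZeta b s - ((b : ℂ) - a) • Gamma s := by
      rw [(hasMellin_sub hsub.1 hsmul.1).2, hsub.2, hsmul.2, hval_a, hval_b, hval_exp]
    _ = Gamma s * (hurwitzZeta a s - hurwitzZeta b s - (b - a)) := by
      rw [smul_eq_mul]
      ring

theorem hurwitzZeta_sub_hurwitzZeta_eq_mellin {a b : ℝ} (ha : a ∈ Set.Ioc 0 1)
    (hb : b ∈ Set.Ioc 0 1) {s : ℂ} (hs : -1 < s.re) :
    hurwitzZeta a s - hurwitzZeta b s =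
      b - a + (Gamma s)⁻¹ * mellin (fun t ↦ (hurwitzKernelDiff a b t : ℂ)) s := by
  have hopen (x : ℝ) : IsOpen {z : ℂ | x < z.re} := isOpen_lt continuous_const continuous_re
  have hleft := (differentiable_hurwitzZeta_sub_hurwitzZeta a b).differentiableOn.analyticOnNhd
    (hopen (-1))
  have hright : AnalyticOnNhd ℂ (fun z ↦ (b : ℂ) - a + (Gamma z)⁻¹ *
      mellin (fun t ↦ (hurwitzKernelDiff a b t : ℂ)) z) {z | -1 < z.re} :=
    DifferentiableOn.analyticOnNhd (fun z hz ↦ ((differentiable_one_div_Gamma z).mul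
      (differentiableAt_mellin_hurwitzKernelDiff ha.1 hb.1 hz)).const_add _
        |>.differentiableWithinAt) (hopen _)
  refine hleft.eqOn_of_preconnected_of_eventuallyEq hright
    (convex_halfSpace_re_gt (-1)).isPreconnected (z₀ := 2) (show -1 < (2 : ℝ) by norm_num) ?_ hs
  filter_upwards [(hopen 1).mem_nhds (show 1 < (2 : ℝ) by norm_num)] with z (hz : 1 < z.re)
  rw [mellin_hurwitzKernelDiff ha hb hz,
    inv_mul_cancel_left₀ (Gamma_ne_zero_of_re_pos (zero_lt_one.trans hz))]
  ring

theorem hurwitzZeta_apply_zero {a : ℝ} (ha : a ∈ Set.Ioc 0 1) :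
    hurwitzZeta a 0 = 1 / 2 - a := by
  have hsub := hurwitzZeta_sub_hurwitzZeta_eq_mellin ha (Set.right_mem_Ioc.2 one_pos) (s := 0)
    (show -1 < (0 : ℝ) by norm_num)
  have hone : hurwitzZeta ((1 : ℝ) : UnitAddCircle) 0 = -1 / 2 := by
    rw [AddCircle.coe_period, hurwitzZeta_zero, riemannZeta_zero]
  -- `Gamma 0 = 0` in Mathlib, so `(Gamma 0)⁻¹` is the true value of the entire `1 / Γ`.
  rw [hone, Gamma_zero, inv_zero, zero_mul, ofReal_one] at hsub
  linear_combination hsub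

end HurwitzKernel

theorem stmt_2_general (M : ℕ) (hM : 0 < M) (C : ℤ → ℂ) (hper : ∀ n : ℤ, C (n + M) = C n) :
    (∀ s : ℂ, 1 < s.re → Summable (fun n : ℕ => C (n + 1) / ((n : ℂ) + 1) ^ s)) ∧
    ((M : ℂ) ^ (-(0 : ℂ)) * ∑ n ∈ Finset.Icc 1 (M : ℤ),
        C n * HurwitzZeta.hurwitzZeta (((n : ℝ) / (M : ℝ) : ℝ) : UnitAddCircle) 0
      = -∑ n ∈ Finset.Icc 1 (M : ℤ), C n * ((n : ℂ) / (M : ℂ) - 1 / 2)) := by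
  refine ⟨fun s hs ↦ ?_, ?_⟩
  · have hper_nat : Function.Periodic (fun n : ℕ ↦ C n) M := fun n ↦ by
      simpa only [Nat.cast_add] using hper n
    simpa using (summable_nat_add_iff 1).2 (LSeriesSummable_of_periodic hper_nat hM hs)
  · rw [neg_zero, cpow_zero, one_mul, ← sum_neg_distrib]
    refine sum_congr rfl fun n hn ↦ ?_
    obtain ⟨hn_one, hn_le⟩ := mem_Icc.1 hn
    have hmem : (n : ℝ) / M ∈ Set.Ioc 0 1 :=
      ⟨div_pos (by exact_mod_cast hn_one) (by exact_mod_cast hM),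
        div_le_one_of_le₀ (by exact_mod_cast hn_le) M.cast_nonneg⟩
    rw [hurwitzZeta_apply_zero hmem, ofReal_div, ofReal_intCast, ofReal_natCast]
    ring

theorem stmt_2 (M : ℕ) (hM : 0 < M) (C : ℤ → ℂ)
    (hper : ∀ n : ℤ, C (n + M) = C n)
    (hmean : ∑ n ∈ Finset.Icc 1 (M : ℤ), C n = 0) :
    (∀ s : ℂ, 1 < s.re → Summable (fun n : ℕ => C (n + 1) / ((n : ℂ) + 1) ^ s)) ∧
    ((M : ℂ) ^ (-(0 : ℂ)) * ∑ n ∈ Finset.Icc 1 (M : ℤ),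
        C n * HurwitzZeta.hurwitzZeta (((n : ℝ) / (M : ℝ) : ℝ) : UnitAddCircle) 0
      = -∑ n ∈ Finset.Icc 1 (M : ℤ), C n * ((n : ℂ) / (M : ℂ) - 1 / 2)) :=
  stmt_2_general M hM C hper
end

section
/- Let M be a positive integer and C : ℤ → ℂ an M-periodic function with mean value zero. Then for every nonnegative integer r, L(-r, C) = -(M^r/(r+1))·Σ_{n=1}^M C(n)·B_{r+1}(n/M), where B_k is the k-th Bernoulli polynomial and L(s,C) is the holomorphic continuation of Σ_{n≥1} C(n)/n^s. -/
open Complex Finset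

/-!
For `0 < x ≤ 1` and `1 < re s`, summing over `n` the error at `n + 1 + x` of linear interpolation
of `t ↦ t ^ (-s)` between `n + 1` and `n + 2` gives `ζ(s) - ζ(s, x) + x ^ (-s) - x`, since
`∑ ((n + 1) ^ (-s) - (n + 2) ^ (-s))` telescopes to `1`. The errors are `O(n ^ (-re s - 2))`, so
this identity persists for `-1 < re s`. At `s = 0` every error vanishes, whence
`ζ(0, x) = ζ(0) + 1 - x = -B₁(x)`; the values at negative integers come from the functional
equation.
-/

theorem norm_linear_interpolation_error_le {E : Type*} [NormedAddCommGroup E]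
    [NormedSpace ℝ E] {f f' : ℝ → E} {a b x K : ℝ} (hx : x ∈ Set.Icc a b)
    (hf : ∀ t ∈ Set.Icc a b, HasDerivWithinAt f (f' t) (Set.Icc a b) t)
    (hK : ∀ t ∈ Set.Icc a b, ‖f' t - f' x‖ ≤ K) :
    ‖(b - x) • f a + (x - a) • f b - (b - a) • f x‖ ≤ 2 * K * ((x - a) * (b - x)) := by
  have hab : a ≤ b := hx.1.trans hx.2
  have remainder_le {y : ℝ} (hy : y ∈ Set.Icc a b) :
      ‖f y - f x - (y - x) • f' x‖ ≤ K * |y - x| := by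
    have hmvt := (convex_Icc a b).norm_image_sub_le_of_norm_hasDerivWithin_le
      (fun t ht ↦ (hf t ht).sub ((hasDerivWithinAt_id t _).smul_const (f' x)))
      (fun t ht ↦ by simpa using hK t ht) hx hy
    refine (congrArg norm ?_).trans_le hmvt
    simp only [Pi.sub_apply, id_eq]
    module
  have ha := remainder_le (Set.left_mem_Icc.mpr hab)
  have hb := remainder_le (Set.right_mem_Icc.mpr hab)
  rw [abs_of_nonpos (sub_nonpos.mpr hx.1)] at ha
  rw [abs_of_nonneg (sub_nonneg.mpr hx.2)] at hb
  have hxa : 0 ≤ x - a := sub_nonneg.mpr hx.1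
  have hbx : 0 ≤ b - x := sub_nonneg.mpr hx.2
  calc
    _ = ‖(b - x) • (f a - f x - (a - x) • f' x) + (x - a) • (f b - f x - (b - x) • f' x)‖ := by
      congr 1
      module
    _ ≤ (b - x) * ‖f a - f x - (a - x) • f' x‖ + (x - a) * ‖f b - f x - (b - x) • f' x‖ := by
      refine (norm_add_le _ _).trans_eq ?_
      rw [norm_smul_of_nonneg hbx, norm_smul_of_nonneg hxa]
    _ ≤ (b - x) * (K * -(a - x)) + (x - a) * (K * (b - x)) := by gcongr
    _ = 2 * K * ((x - a) * (b - x)) := by ring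

theorem hasDerivAt_ofReal_cpow {t : ℝ} (ht : 0 < t) (w : ℂ) :
    HasDerivAt (fun u : ℝ ↦ (u : ℂ) ^ w) (w * (t : ℂ) ^ (w - 1)) t := by
  simpa using
    ((hasDerivAt_id (t : ℂ)).cpow_const (c := w) (ofReal_mem_slitPlane.mpr ht)).comp_ofReal

theorem norm_ofReal_cpow_sub_ofReal_cpow_le {a t u : ℝ} (ha : 0 < a) (ht : a ≤ t) (hu : a ≤ u)
    {w : ℂ} (hw : w.re ≤ 1) :
    ‖(u : ℂ) ^ w - (t : ℂ) ^ w‖ ≤ ‖w‖ * a ^ (w.re - 1) * |u - t| := by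
  refine (convex_Ici a).norm_image_sub_le_of_norm_hasDerivWithin_le
    (fun v hv ↦ (hasDerivAt_ofReal_cpow (ha.trans_le hv) w).hasDerivWithinAt) (fun v hv ↦ ?_) ht hu
  rw [norm_mul, norm_cpow_eq_rpow_re_of_pos (ha.trans_le hv), sub_re, one_re]
  gcongr ‖w‖ * ?_
  exact Real.rpow_le_rpow_of_nonpos ha hv (by linarith)

/-- The error at `c + x` of linear interpolation of `t ↦ t ^ (-s)` between `c` and `c + 1`; only
`0 < c` and `0 ≤ x ≤ 1` are meaningful. -/
noncomputable def cpowInterpolationError (c x : ℝ) (s : ℂ) : ℂ :=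
  (1 - x) * (c : ℂ) ^ (-s) + x * ((c + 1 : ℝ) : ℂ) ^ (-s) - ((c + x : ℝ) : ℂ) ^ (-s)

section CpowInterpolationError

variable {c x : ℝ}

theorem cpowInterpolationError_zero_right : cpowInterpolationError c x 0 = 0 := by
  simp [cpowInterpolationError]

theorem differentiable_cpowInterpolationError (hc : 0 < c) (hx : 0 ≤ x) :
    Differentiable ℂ (cpowInterpolationError c x) := by
  have differentiable_cpow {y : ℝ} (hy : 0 < y) : Differentiable ℂ fun s : ℂ ↦ (y : ℂ) ^ (-s) :=
    differentiable_id.neg.const_cpow (Or.inl (ofReal_ne_zero.mpr hy.ne'))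
  exact (((differentiable_cpow hc).const_mul _).add
    ((differentiable_cpow (by positivity)).const_mul _)).sub (differentiable_cpow (by positivity))

theorem norm_cpowInterpolationError_le (hc : 0 < c) (hx : x ∈ Set.Icc 0 1) {s : ℂ}
    (hs : -2 ≤ s.re) :
    ‖cpowInterpolationError c x s‖ ≤ ‖s‖ * ‖s + 1‖ * c ^ (-s.re - 2) := by
  have hcx : c + x ∈ Set.Icc c (c + 1) := by simpa using hx
  have deriv_sub_le (t : ℝ) (ht : t ∈ Set.Icc c (c + 1)) :
      ‖-s * (t : ℂ) ^ (-s - 1) - -s * ((c + x : ℝ) : ℂ) ^ (-s - 1)‖ ≤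
        ‖s‖ * ‖s + 1‖ * c ^ (-s.re - 2) := by
    have hdist : |t - (c + x)| ≤ 1 := by
      simpa [Real.dist_eq] using Real.dist_le_of_mem_Icc ht hcx
    calc
      _ = ‖s‖ * ‖(t : ℂ) ^ (-s - 1) - ((c + x : ℝ) : ℂ) ^ (-s - 1)‖ := by
        rw [← mul_sub, norm_mul, norm_neg]
      _ ≤ ‖s‖ * (‖-s - 1‖ * c ^ ((-s - 1).re - 1) * 1) := by
        gcongr
        refine (norm_ofReal_cpow_sub_ofReal_cpow_le hc hcx.1 ht.1 ?_).trans (by gcongr)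
        simp only [sub_re, neg_re, one_re]
        linarith
      _ = ‖s‖ * ‖s + 1‖ * c ^ (-s.re - 2) := by
        rw [← norm_neg (-s - 1), sub_re, neg_re, one_re]
        ring_nf
  have herror := norm_linear_interpolation_error_le hcx
    (fun t ht ↦ (hasDerivAt_ofReal_cpow (hc.trans_le ht.1) (-s)).hasDerivWithinAt) deriv_sub_le
  have hweight : 2 * (x * (1 - x)) ≤ 1 := by nlinarith [sq_nonneg (2 * x - 1)]
  calc
    _ ≤ 2 * (‖s‖ * ‖s + 1‖ * c ^ (-s.re - 2)) * (x * (1 - x)) := by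
      simpa [cpowInterpolationError] using herror
    _ = ‖s‖ * ‖s + 1‖ * c ^ (-s.re - 2) * (2 * (x * (1 - x))) := by ring
    _ ≤ ‖s‖ * ‖s + 1‖ * c ^ (-s.re - 2) := mul_le_of_le_one_right (by positivity) hweight

theorem differentiableOn_tsum_cpowInterpolationError (hx : x ∈ Set.Icc 0 1) :
    DifferentiableOn ℂ (fun s ↦ ∑' n : ℕ, cpowInterpolationError (n + 1) x s)
      {s | -1 < s.re} := by
  intro z (hz : -1 < z.re)
  obtain ⟨δ, hδ, hδz⟩ := exists_between hz
  set R := ‖z‖ + 1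
  let U : Set ℂ := {s | δ < s.re} ∩ Metric.ball 0 R
  have hU : IsOpen U := (isOpen_lt continuous_const continuous_re).inter Metric.isOpen_ball
  have hzU : z ∈ U := ⟨hδz, by simp [R]⟩
  have summable_bound : Summable fun n : ℕ ↦ R * (R + 1) * (n + 1 : ℝ) ^ (-δ - 2) := by
    refine .mul_left _ ?_
    simpa using (summable_nat_add_iff 1).mpr
      (Real.summable_nat_rpow (p := -δ - 2).mpr (by linarith))
  refine ((differentiableOn_tsum_of_summable_norm summable_bound (fun n ↦ ?_) hU
    fun n s hs ↦ ?_).differentiableAt (hU.mem_nhds hzU)).differentiableWithinAt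
  · exact (differentiable_cpowInterpolationError (by positivity) hx.1).differentiableOn
  · have hδs : δ < s.re := hs.1
    have hsR : ‖s‖ ≤ R := (mem_ball_zero_iff.mp hs.2).le
    have hs1 : ‖s + 1‖ ≤ R + 1 := (norm_add_le _ _).trans (by simpa using hsR)
    refine (norm_cpowInterpolationError_le (by positivity) hx (by linarith)).trans ?_
    gcongr
    simp

theorem hasSum_cpowInterpolationError_of_one_lt_re (hx : x ∈ Set.Icc 0 1) {s : ℂ}
    (hs : 1 < s.re) :
    HasSum (fun n : ℕ ↦ cpowInterpolationError (n + 1) x s)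
      (riemannZeta s - HurwitzZeta.hurwitzZeta x s + (x : ℂ) ^ (-s) - x) := by
  have hζ : HasSum (fun n : ℕ ↦ 1 / (n + 1 : ℂ) ^ s) (riemannZeta s) := by
    have h1 : ((1 : ℝ) : UnitAddCircle) = 0 := AddCircle.coe_period 1
    simpa [h1, HurwitzZeta.hurwitzZeta_zero] using
      HurwitzZeta.hasSum_hurwitzZeta_of_one_lt_re (a := 1) (by simp) hs
  have hζ_tail := (hasSum_nat_add_iff' 1).mpr hζ
  have hζx_tail := (hasSum_nat_add_iff' 1).mpr
    (HurwitzZeta.hasSum_hurwitzZeta_of_one_lt_re hx hs)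
  convert! ((hζ.mul_left (1 - x : ℂ)).add (hζ_tail.mul_left (x : ℂ))).sub hζx_tail using 1
  · ext n
    simp [cpowInterpolationError, cpow_neg]
  · simp only [cpow_neg, range_one, one_div, sum_singleton, Nat.cast_zero, zero_add, one_cpow,
      inv_one]
    ring

theorem tsum_cpowInterpolationError (hx : x ∈ Set.Ioc 0 1) {s : ℂ} (hs : -1 < s.re) :
    ∑' n : ℕ, cpowInterpolationError (n + 1) x s =
      riemannZeta s - HurwitzZeta.hurwitzZeta x s + (x : ℂ) ^ (-s) - x := by
  have hx' : x ∈ Set.Icc 0 1 := Set.Ioc_subset_Icc_self hx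
  have isOpen_halfPlane (σ : ℝ) : IsOpen {s : ℂ | σ < s.re} :=
    isOpen_lt continuous_const continuous_re
  have hzeta : Differentiable ℂ fun s ↦
      riemannZeta s - HurwitzZeta.hurwitzZeta x s + (x : ℂ) ^ (-s) - x := by
    simp_rw [← HurwitzZeta.hurwitzZeta_zero]
    exact ((HurwitzZeta.differentiable_hurwitzZeta_sub_hurwitzZeta _ _).add
      (differentiable_id.neg.const_cpow (Or.inl (ofReal_ne_zero.mpr hx.1.ne')))).sub_const _
  refine ((differentiableOn_tsum_cpowInterpolationError hx').analyticOnNhd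
    (isOpen_halfPlane (-1))).eqOn_of_preconnected_of_eventuallyEq
    (hzeta.differentiableOn.analyticOnNhd (isOpen_halfPlane (-1)))
    (convex_halfSpace_re_gt _).isPreconnected (z₀ := 2) (by norm_num) ?_ hs
  filter_upwards [(isOpen_halfPlane 1).mem_nhds (by norm_num : (1 : ℝ) < (2 : ℂ).re)] with z hz
  exact (hasSum_cpowInterpolationError_of_one_lt_re hx' hz).tsum_eq

end CpowInterpolationError

theorem hurwitzZeta_apply_zero_s4 {x : ℝ} (hx : x ∈ Set.Ioc 0 1) :
    HurwitzZeta.hurwitzZeta x 0 = 1 / 2 - x := by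
  have hsum := tsum_cpowInterpolationError hx (s := 0) (by simp)
  simp only [cpowInterpolationError_zero_right, tsum_zero, riemannZeta_zero, neg_zero,
    cpow_zero] at hsum
  linear_combination hsum

theorem hurwitzZeta_neg_natCast {x : ℝ} (hx : x ∈ Set.Ioc 0 1) (r : ℕ) :
    HurwitzZeta.hurwitzZeta x (-r) =
      -1 / (r + 1) * ((Polynomial.bernoulli (r + 1)).map (algebraMap ℚ ℂ)).eval (x : ℂ) := by
  obtain rfl | hr := eq_or_ne r 0
  · simp [hurwitzZeta_apply_zero_s4 hx, Polynomial.bernoulli_one]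
  · exact HurwitzZeta.hurwitzZeta_neg_nat hr (Set.Ioc_subset_Icc_self hx)

theorem hurwitzZeta_ratCast_neg_natCast {q : ℚ} (hq : q ∈ Set.Ioc 0 1) (r : ℕ) :
    HurwitzZeta.hurwitzZeta ((q : ℝ) : UnitAddCircle) (-r) =
      -1 / (r + 1) * ((Polynomial.bernoulli (r + 1)).eval q : ℚ) := by
  have hq' : (q : ℝ) ∈ Set.Ioc 0 1 := ⟨by exact_mod_cast hq.1, by exact_mod_cast hq.2⟩
  rw [hurwitzZeta_neg_natCast hq', ofReal_ratCast, ← eq_ratCast (algebraMap ℚ ℂ) q,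
    Polynomial.eval_map_apply, eq_ratCast]

theorem stmt_4_general (M : ℕ) (C : ℤ → ℂ) (r : ℕ) :
    (M : ℂ) ^ (-(-(r : ℂ))) * ∑ n ∈ Finset.Icc 1 (M : ℤ),
        C n * HurwitzZeta.hurwitzZeta (((n : ℝ) / (M : ℝ) : ℝ) : UnitAddCircle) (-(r : ℂ))
      = -((M : ℂ) ^ r / ((r : ℂ) + 1)) * ∑ n ∈ Finset.Icc 1 (M : ℤ),
          C n * (((Polynomial.bernoulli (r + 1)).eval ((n : ℚ) / (M : ℚ)) : ℚ) : ℂ) := by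
  rw [neg_neg, cpow_natCast, Finset.mul_sum, Finset.mul_sum]
  refine Finset.sum_congr rfl fun n hn ↦ ?_
  obtain ⟨hn1, hnM⟩ := Finset.mem_Icc.mp hn
  have hn0 : (0 : ℚ) < n := by exact_mod_cast hn1
  have hnM' : (n : ℚ) ≤ M := by exact_mod_cast hnM
  have hM : (0 : ℚ) < M := hn0.trans_le hnM'
  have hvalue := hurwitzZeta_ratCast_neg_natCast
    (q := n / M) ⟨div_pos hn0 hM, (div_le_one hM).mpr hnM'⟩ r
  push_cast at hvalue
  rw [hvalue]
  ring

theorem stmt_4 (M : ℕ) (hM : 0 < M) (C : ℤ → ℂ)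
    (hper : ∀ n : ℤ, C (n + M) = C n)
    (hmean : ∑ n ∈ Finset.Icc 1 (M : ℤ), C n = 0) (r : ℕ) :
    (M : ℂ) ^ (-(-(r : ℂ))) * ∑ n ∈ Finset.Icc 1 (M : ℤ),
        C n * HurwitzZeta.hurwitzZeta (((n : ℝ) / (M : ℝ) : ℝ) : UnitAddCircle) (-(r : ℂ))
      = -((M : ℂ) ^ r / ((r : ℂ) + 1)) * ∑ n ∈ Finset.Icc 1 (M : ℤ),
          C n * (((Polynomial.bernoulli (r + 1)).eval ((n : ℚ) / (M : ℚ)) : ℚ) : ℂ) :=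
  stmt_4_general M C r
end
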